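/- arXiv:1811.02420 — 2 statements merged into one kernel-verified Lean document; each statement's English description precedes it below -/
import Mathlib

section
/- For any graphs G and H, χ_ℓ(G □ H) ≤ min{χ_ℓ(G) + col(H), col(G) + χ_ℓ(H)} − 1, where col denotes the coloring number (degeneracy plus one). -/
open SimpleGraph

/-- A proper coloring of `G` from the list assignment `L`. -/
def IsProperListColoring {V : Type*} (G : SimpleGraph V) (L : V → Finset ℕ) (f : V → ℕ) : Prop :=
  (∀ v, f v ∈ L v) ∧ ∀ ⦃v w⦄, G.Adj v w → f v ≠ f w

/-- `G` is `k`-choosable: every `k`-assignment admits a proper coloring. -/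
def Choosable {V : Type*} (G : SimpleGraph V) (k : ℕ) : Prop :=
  ∀ L : V → Finset ℕ, (∀ v, (L v).card = k) → ∃ f, IsProperListColoring G L f

/-- The list chromatic number: the least `k` such that `G` is `k`-choosable. -/
noncomputable def listChromaticNumber {V : Type*} (G : SimpleGraph V) : ℕ :=
  sInf {k | Choosable G k}

/-- The list color function `P_ℓ(G,k)`: the minimum number of proper `L`-colorings
over all `k`-assignments `L`. -/
noncomputable def listColorFunction {V : Type*} (G : SimpleGraph V) (k : ℕ) : ℕ :=
  sInf {n | ∃ L : V → Finset ℕ, (∀ v, (L v).card = k) ∧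
    n = Nat.card {f : V → ℕ // IsProperListColoring G L f}}

/-- `G` is strong `k`-chromatic-choosable: `χ(G) = k` and every `(k-1)`-assignment
admitting no proper coloring is constant. -/
def StrongChromChoosable {V : Type*} (G : SimpleGraph V) (k : ℕ) : Prop :=
  G.chromaticNumber = k ∧
  ∀ L : V → Finset ℕ, (∀ v, (L v).card = k - 1) →
    (¬ ∃ f, IsProperListColoring G L f) → ∀ v w, L v = L w

/-- The coloring number of G: the least d for which there is an ordering of the
vertices in which every vertex has fewer than d earlier neighbors. -/
noncomputable def coloringNumber {V : Type*} [Fintype V] (G : SimpleGraph V) : ℕ :=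
  sInf {d | ∃ e : V ≃ Fin (Fintype.card V),
    ∀ i : V, Nat.card {j : V // G.Adj i j ∧ e j < e i} < d}

/-!
Color the copies of `G` in `G □ H` one at a time, along an ordering of the vertices of `H` in
which every vertex has fewer than `col(H)` earlier neighbors. When the copy at `w` is reached, each
`(v, w)` has at most `col(H) - 1` colored neighbors, so deleting their colors from a list of size
`χ_ℓ(G) + col(H) - 1` leaves at least `χ_ℓ(G)` colors, and the copy can be colored from what
remains.
-/

section Choosable

variable {V W : Type*} {G : SimpleGraph V} {H : SimpleGraph W} {k : ℕ}

theorem Choosable.exists_of_le_card (hG : Choosable G k) {L : V → Finset ℕ}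
    (hL : ∀ v, k ≤ (L v).card) : ∃ f, IsProperListColoring G L f := by
  choose L' hsub hcard using fun v => Finset.exists_subset_card_eq (hL v)
  obtain ⟨f, hmem, hne⟩ := hG L' hcard
  exact ⟨f, fun v => hsub v (hmem v), hne⟩

theorem Choosable.exists_forall_ne {ι : Type*} [Finite ι] (hG : Choosable G k)
    {L : V → Finset ℕ} (hL : ∀ v, k + Nat.card ι ≤ (L v).card) (c : ι → V → ℕ) :
    ∃ f, IsProperListColoring G L f ∧ ∀ i v, f v ≠ c i v := by
  cases nonempty_fintype ι
  let used (v : V) : Finset ℕ := Finset.univ.image (c · v)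
  have hused (v : V) : (used v).card ≤ Nat.card ι :=
    Finset.card_image_le.trans_eq Nat.card_eq_fintype_card.symm
  have hremaining (v : V) : k ≤ (L v \ used v).card := by
    have := Finset.le_card_sdiff (used v) (L v)
    have := hL v
    have := hused v
    omega
  obtain ⟨f, hmem, hne⟩ := hG.exists_of_le_card hremaining
  refine ⟨f, ⟨fun v => (Finset.mem_sdiff.1 (hmem v)).1, hne⟩, fun i v h => ?_⟩
  exact (Finset.mem_sdiff.1 (hmem v)).2 (Finset.mem_image.2 ⟨i, Finset.mem_univ i, h.symm⟩)

theorem Choosable.of_iso (φ : G ≃g H) (hG : Choosable G k) : Choosable H k := by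
  intro L hL
  obtain ⟨f, hmem, hne⟩ := hG (L ∘ φ) fun v => hL (φ v)
  exact ⟨f ∘ φ.symm, fun w => by simpa using hmem (φ.symm w),
    fun _ _ hadj => hne (φ.symm.map_adj_iff.2 hadj)⟩

theorem choosable_of_isEmpty [IsEmpty V] (G : SimpleGraph V) (k : ℕ) : Choosable G k :=
  fun _ _ => ⟨isEmptyElim, isEmptyElim, isEmptyElim⟩

theorem choosable_card [Fintype V] (G : SimpleGraph V) : Choosable G (Fintype.card V) := by
  intro L hL
  have hall (s : Finset V) : s.card ≤ (s.biUnion L).card := by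
    rcases s.eq_empty_or_nonempty with rfl | ⟨v, hv⟩
    · simp
    · calc s.card ≤ Fintype.card V := s.card_le_univ
        _ = (L v).card := (hL v).symm
        _ ≤ (s.biUnion L).card := Finset.card_le_card (Finset.subset_biUnion_of_mem L hv)
  obtain ⟨f, hinj, hmem⟩ := (Finset.all_card_le_biUnion_card_iff_exists_injective L).1 hall
  exact ⟨f, hmem, fun _ _ hadj => hinj.ne hadj.ne⟩

theorem choosable_listChromaticNumber [Finite V] (G : SimpleGraph V) :
    Choosable G (listChromaticNumber G) := by
  cases nonempty_fintype V
  exact Nat.sInf_mem (s := {k | Choosable G k}) ⟨_, choosable_card G⟩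

theorem Choosable.listChromaticNumber_le (hG : Choosable G k) : listChromaticNumber G ≤ k :=
  Nat.sInf_le hG

theorem listChromaticNumber_congr (φ : G ≃g H) :
    listChromaticNumber G = listChromaticNumber H :=
  congrArg sInf (Set.ext fun _ => ⟨Choosable.of_iso φ, Choosable.of_iso φ.symm⟩)

end Choosable

section Degenerate

variable {V : Type*}

/-- `d`-degeneracy: the vertices can be well-ordered so that each has at most `d` earlier
neighbors. A well-order replaces the usual enumeration so that infinite graphs are allowed. -/
def Degenerate (G : SimpleGraph V) (d : ℕ) : Prop :=
  ∃ r : V → V → Prop, IsWellOrder V r ∧ ∀ v, {w | G.Adj v w ∧ r w v}.encard ≤ d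

theorem exists_equiv_card_lt_coloringNumber [Fintype V] (G : SimpleGraph V) :
    ∃ e : V ≃ Fin (Fintype.card V),
      ∀ v, Nat.card {w : V // G.Adj v w ∧ e w < e v} < coloringNumber G := by
  refine Nat.sInf_mem (s := {d | ∃ e : V ≃ Fin (Fintype.card V),
    ∀ v, Nat.card {w : V // G.Adj v w ∧ e w < e v} < d})
    ⟨Fintype.card V + 1, Fintype.equivFin V, fun v => Nat.lt_succ_of_le ?_⟩
  exact (Finite.card_subtype_le _).trans_eq Nat.card_eq_fintype_card

theorem coloringNumber_pos [Fintype V] [Nonempty V] (G : SimpleGraph V) :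
    0 < coloringNumber G := by
  obtain ⟨_, he⟩ := exists_equiv_card_lt_coloringNumber G
  exact Nat.zero_lt_of_lt (he (Classical.arbitrary V))

theorem degenerate_coloringNumber_sub_one [Fintype V] (G : SimpleGraph V) :
    Degenerate G (coloringNumber G - 1) := by
  obtain ⟨e, he⟩ := exists_equiv_card_lt_coloringNumber G
  refine ⟨e ⁻¹'o (· < ·), (RelIso.preimage e (· < ·)).toRelEmbedding.isWellOrder, fun v => ?_⟩
  exact Set.encard_le_coe_iff_finite_ncard_le.2 ⟨Set.toFinite _, Nat.le_sub_one_of_lt (he v)⟩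

end Degenerate

theorem exists_forall_of_wellFounded {ι : Type*} {α : ι → Type*} {r : ι → ι → Prop}
    (hr : WellFounded r) {P : ∀ i, (∀ j, r j i → α j) → α i → Prop}
    (hP : ∀ i g, ∃ x, P i g x) : ∃ f : ∀ i, α i, ∀ i, P i (fun j _ => f j) (f i) := by
  choose next hnext using hP
  refine ⟨hr.fix next, fun i => ?_⟩
  rw [hr.fix_eq]
  exact hnext i _

section BoxProd

variable {V W : Type*} {G : SimpleGraph V} {H : SimpleGraph W} {a b : ℕ}

theorem isProperListColoring_boxProd_iff {L : V × W → Finset ℕ} {f : V × W → ℕ} :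
    IsProperListColoring (G □ H) L f ↔
      (∀ w, IsProperListColoring G (fun v => L (v, w)) fun v => f (v, w)) ∧
        ∀ v ⦃w w'⦄, H.Adj w w' → f (v, w) ≠ f (v, w') := by
  constructor
  · rintro ⟨hmem, hne⟩
    exact ⟨fun w => ⟨fun v => hmem (v, w), fun _ _ hadj => hne (boxProd_adj_left.2 hadj)⟩,
      fun _ _ _ hadj => hne (boxProd_adj_right.2 hadj)⟩
  · rintro ⟨hG, hH⟩
    refine ⟨fun x => (hG x.2).1 x.1, ?_⟩
    rintro ⟨v, w⟩ ⟨v', w'⟩ hadj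
    obtain ⟨hadj, rfl⟩ | ⟨hadj, rfl⟩ := boxProd_adj.1 hadj
    · exact (hG w).2 hadj
    · exact hH v hadj

theorem Choosable.boxProd (hG : Choosable G a) (hH : Degenerate H b) :
    Choosable (G □ H) (a + b) := by
  intro L hL
  obtain ⟨r, _, hr⟩ := hH
  have hextend (w : W) (g : ∀ w', r w' w → V → ℕ) :
      ∃ f, IsProperListColoring G (fun v => L (v, w)) f ∧
        ∀ w' (hw' : r w' w), H.Adj w w' → ∀ v, f v ≠ g w' hw' v := by
    obtain ⟨hfin, hcard⟩ := Set.encard_le_coe_iff_finite_ncard_le.1 (hr w)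
    have : Finite {w' | H.Adj w w' ∧ r w' w} := hfin
    obtain ⟨f, hf, hne⟩ := hG.exists_forall_ne
      (fun v => (Nat.add_le_add_left hcard a).trans (hL (v, w)).ge) fun w' => g w' w'.2.2
    exact ⟨f, hf, fun w' hw' hadj => hne ⟨w', hadj, hw'⟩⟩
  obtain ⟨c, hc⟩ := exists_forall_of_wellFounded (IsWellFounded.wf (r := r)) hextend
  refine ⟨fun x => c x.2 x.1,
    isProperListColoring_boxProd_iff.2 ⟨fun w => (hc w).1, fun v w w' hadj => ?_⟩⟩
  obtain hlt | rfl | hgt := trichotomous_of r w w'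
  · exact ((hc w').2 w hlt hadj.symm v).symm
  · exact (hadj.ne rfl).elim
  · exact (hc w).2 w' hgt hadj v

theorem listChromaticNumber_boxProd_le [Finite V] [Fintype W]
    (G : SimpleGraph V) (H : SimpleGraph W) :
    listChromaticNumber (G □ H) ≤ listChromaticNumber G + coloringNumber H - 1 := by
  rcases isEmpty_or_nonempty W with _ | _
  · exact (choosable_of_isEmpty (G □ H) _).listChromaticNumber_le
  · rw [Nat.add_sub_assoc (coloringNumber_pos H)]
    exact ((choosable_listChromaticNumber G).boxProd
      (degenerate_coloringNumber_sub_one H)).listChromaticNumber_le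

end BoxProd

theorem listChromatic_boxProd_le_min {V W : Type*} [Fintype V] [Fintype W]
    (G : SimpleGraph V) (H : SimpleGraph W) :
    listChromaticNumber (G □ H) ≤
      min (listChromaticNumber G + coloringNumber H)
        (coloringNumber G + listChromaticNumber H) - 1 := by
  have hGH := listChromaticNumber_boxProd_le G H
  have hHG : listChromaticNumber (G □ H) ≤ coloringNumber G + listChromaticNumber H - 1 := by
    rw [listChromaticNumber_congr (boxProdComm G H), add_comm]
    exact listChromaticNumber_boxProd_le H G
  omega
end

section
/- For n, a ∈ ℕ with n ≥ a + 1, the least b such that χ_ℓ(K_n □ K_{a,b}) = n + a equals ((n+a−1)! / (a−1)!)^a. In particular, for any l ∈ ℕ, the least b with χ_ℓ(C_{2l+1} □ K_{2,b}) = 5 equals 9(9^l − 1)^2. -/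
open SimpleGraph

/-! Let `G` be strong `(k + 1)`-chromatic-choosable and `a ≤ k`. A choice of colorings of the `a`
copies of `G` on the small side of `G □ K_{a,b}` fails to extend to a copy on the large side exactly
when the lists left on that copy all equal a single `k`-set. If two of the `a` list assignments
share a color at some vertex, using it twice there avoids such failures altogether. Otherwise `G`
not being `a`-colorable forces the `k`-set to be the same for all choices blocked by the same copy,
so that every copy blocks at most one choice. As there are at least `P_ℓ(G, k + a) ^ a` choices,
that many copies are needed; they also suffice, each blocking one choice.

For complete graphs, `P_ℓ` is found by coloring greedily. For an odd cycle, constant lists minimize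
the number of colorings even after the color of one vertex has been fixed: removing two neighboring
vertices from the rest of the cycle gives a recursive lower bound, in which constant lists attain
equality. -/

open scoped Finset

section ListColoring

variable {V : Type*} {G : SimpleGraph V} {L L' : V → Finset ℕ} {f : V → ℕ} {k : ℕ}

theorem IsProperListColoring.mono (hf : IsProperListColoring G L f) (h : ∀ v, L v ⊆ L' v) :
    IsProperListColoring G L' f :=
  ⟨fun v => h v (hf.1 v), hf.2⟩

theorem IsProperListColoring.colorable (hf : IsProperListColoring G L f) {B : Finset ℕ}
    (hB : ∀ v, L v ⊆ B) : G.Colorable #B := by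
  let C : G.Coloring B := Coloring.mk (fun v => ⟨f v, hB v (hf.1 v)⟩) fun hvw h =>
    hf.2 hvw (congrArg Subtype.val h)
  simpa using C.colorable

theorem Choosable.exists_isProperListColoring (hG : Choosable G k) (hL : ∀ v, k ≤ #(L v)) :
    ∃ f, IsProperListColoring G L f := by
  choose S hSL hS using fun v => Finset.exists_subset_card_eq (hL v)
  exact (hG S hS).imp fun f hf => hf.mono hSL

theorem Choosable.mono {k' : ℕ} (hk : k ≤ k') (hG : Choosable G k) : Choosable G k' :=
  fun _ hL => hG.exists_isProperListColoring fun v => hk.trans (hL v).ge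

theorem Choosable.exists_isProperListColoring_apply_eq (hG : Choosable G k)
    (hL : ∀ v, k < #(L v)) {v : V} {c : ℕ} (hc : c ∈ L v) :
    ∃ f, IsProperListColoring G L f ∧ f v = c := by
  classical
  obtain ⟨f, hfL, hf⟩ := hG.exists_isProperListColoring (L := fun w => (L w).erase c) fun w =>
    (Nat.le_sub_one_of_lt (hL w)).trans Finset.pred_card_le_card_erase
  have hfc (w) : f w ≠ c := Finset.ne_of_mem_erase (hfL w)
  refine ⟨Function.update f v c, ⟨fun w => ?_, fun w x hwx => ?_⟩, Function.update_self ..⟩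
  · obtain rfl | hw := eq_or_ne w v
    · rwa [Function.update_self]
    · rw [Function.update_of_ne hw]
      exact Finset.mem_of_mem_erase (hfL w)
  · obtain rfl | hw := eq_or_ne w v
    · rw [Function.update_self, Function.update_of_ne hwx.ne']
      exact (hfc x).symm
    · rw [Function.update_of_ne hw]
      obtain rfl | hx := eq_or_ne x v
      · rw [Function.update_self]
        exact hfc w
      · rw [Function.update_of_ne hx]
        exact hf hwx

theorem listChromaticNumber_eq_succ_iff :
    listChromaticNumber G = k + 1 ↔ Choosable G (k + 1) ∧ ¬ Choosable G k :=
  Nat.sInf_upward_closed_eq_succ_iff (fun _ _ hk hG => Choosable.mono hk hG) k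

/-- The type of proper colorings of `G` from the lists `L`, whose cardinality `listColorFunction`
minimizes over `L`. -/
abbrev ListColoring (G : SimpleGraph V) (L : V → Finset ℕ) : Type _ :=
  {f : V → ℕ // IsProperListColoring G L f}

instance ListColoring.instFinite [Finite V] : Finite (ListColoring G L) :=
  Finite.of_injective (fun f v => (⟨f.1 v, f.2.1 v⟩ : L v)) fun _ _ h =>
    Subtype.ext <| funext fun v => congrArg Subtype.val (congrFun h v)

theorem listColorFunction_le (hL : ∀ v, #(L v) = k) :
    listColorFunction G k ≤ Nat.card (ListColoring G L) :=
  Nat.sInf_le ⟨L, hL, rfl⟩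

theorem exists_card_listColoring_eq_listColorFunction (G : SimpleGraph V) (k : ℕ) :
    ∃ L : V → Finset ℕ, (∀ v, #(L v) = k) ∧
      Nat.card (ListColoring G L) = listColorFunction G k := by
  obtain ⟨L, hL, h⟩ : listColorFunction G k ∈ {n | ∃ L : V → Finset ℕ, (∀ v, #(L v) = k) ∧
      n = Nat.card (ListColoring G L)} :=
    Nat.sInf_mem ⟨_, fun _ => Finset.range k, fun _ => Finset.card_range k, rfl⟩
  exact ⟨L, hL, h.symm⟩

theorem listColorFunction_eq {A : Finset ℕ} (hA : #A = k)
    (h : ∀ L : V → Finset ℕ, (∀ v, #(L v) = k) →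
      Nat.card (ListColoring G fun _ => A) ≤ Nat.card (ListColoring G L)) :
    listColorFunction G k = Nat.card (ListColoring G fun _ => A) := by
  obtain ⟨L, hL, hmin⟩ := exists_card_listColoring_eq_listColorFunction G k
  exact (listColorFunction_le fun _ => hA).antisymm (hmin ▸ h L hL)

theorem card_listColoring_map (G : SimpleGraph V) (L : V → Finset ℕ) (φ : ℕ ↪ ℕ) :
    Nat.card (ListColoring G fun v => (L v).map φ) = Nat.card (ListColoring G L) := by
  let rename (f : ListColoring G L) : ListColoring G fun v => (L v).map φ :=
    ⟨φ ∘ f.1, fun v => Finset.mem_map_of_mem φ (f.2.1 v), fun _ _ hvw => φ.injective.ne (f.2.2 hvw)⟩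
  refine (Nat.card_eq_of_bijective rename ⟨fun _ _ h => ?_, fun g => ?_⟩).symm
  · exact Subtype.ext (φ.injective.comp_left (congrArg Subtype.val h))
  · choose f hfL hf using fun v => Finset.mem_map.1 (g.2.1 v)
    refine ⟨⟨f, hfL, fun v w hvw h => g.2.2 hvw ?_⟩, Subtype.ext (funext hf)⟩
    rw [← hf v, ← hf w, h]

end ListColoring

section StrongChromChoosable

variable {V : Type*} {G : SimpleGraph V} {L : V → Finset ℕ} {k : ℕ}

theorem StrongChromChoosable.not_colorable (hG : StrongChromChoosable G (k + 1)) :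
    ¬ G.Colorable k := fun h => by
  have := hG.1 ▸ h.chromaticNumber_le
  norm_cast at this
  omega

theorem StrongChromChoosable.nontrivial (hG : StrongChromChoosable G (k + 1)) (hk : 1 ≤ k) :
    Nontrivial V := by
  by_contra hV
  rw [not_nontrivial_iff_subsingleton] at hV
  have := hG.1 ▸ G.chromaticNumber_le_one_of_subsingleton
  norm_cast at this
  omega

theorem StrongChromChoosable.exists_forall_eq (hG : StrongChromChoosable G (k + 1)) (hk : 1 ≤ k)
    (hL : ∀ v, k ≤ #(L v)) (hno : ¬ ∃ f, IsProperListColoring G L f) :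
    ∃ B : Finset ℕ, #B = k ∧ ∀ v, L v = B := by
  classical
  have : Nontrivial V := hG.nontrivial hk
  have hconst {S : V → Finset ℕ} (hSL : ∀ v, S v ⊆ L v) (hS : ∀ v, #(S v) = k) (v w) :
      S v = S w :=
    hG.2 S hS (fun ⟨f, hf⟩ => hno ⟨f, hf.mono hSL⟩) v w
  choose S hSL hS using fun v => Finset.exists_subset_card_eq (hL v)
  have hcard (v) : #(L v) = k := by
    by_contra hne
    obtain ⟨w, hwv⟩ := exists_ne v
    obtain ⟨c, hcL, hcS⟩ := Finset.exists_mem_notMem_of_card_lt_card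
      ((hS w).trans_lt ((hL v).lt_of_ne' hne))
    obtain ⟨T, hcT, hTL, hT⟩ := Finset.exists_subsuperset_card_eq
      (Finset.singleton_subset_iff.2 hcL) (by simpa using hk) (hL v)
    have hTS : Function.update S v T v = Function.update S v T w :=
      hconst (Function.forall_update_iff S (p := fun v A => A ⊆ L v) |>.2 ⟨hTL, fun u _ => hSL u⟩)
        (Function.forall_update_iff S (p := fun _ A => #A = k) |>.2 ⟨hT, fun u _ => hS u⟩) v w
    rw [Function.update_self, Function.update_of_ne hwv] at hTS
    exact hcS (hTS ▸ Finset.singleton_subset_iff.1 hcT)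
  obtain ⟨v₀⟩ := Nontrivial.to_nonempty (α := V)
  exact ⟨L v₀, hcard v₀, fun v => hconst (fun _ => subset_rfl) hcard v v₀⟩

theorem StrongChromChoosable.choosable (hG : StrongChromChoosable G (k + 1)) (hk : 1 ≤ k) :
    Choosable G (k + 1) := by
  intro L hL
  by_contra hno
  obtain ⟨B, hB, hLB⟩ := hG.exists_forall_eq hk (fun v => by rw [hL v]; exact k.le_succ) hno
  have : Nontrivial V := hG.nontrivial hk
  obtain ⟨v⟩ := Nontrivial.to_nonempty (α := V)
  have := hL v
  rw [hLB v, hB] at this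
  omega

end StrongChromChoosable

section BoxProd

variable {V α β : Type*} [Fintype α] {G : SimpleGraph V} {L : V × (α ⊕ β) → Finset ℕ}
  {g g' : α → V → ℕ} {j : β} {k : ℕ}

/-- The lists left on the copy of `G` indexed by `j : β` in `G □ completeBipartiteGraph α β` once
the copies indexed by `α` are colored by `g`. -/
def residualList (L : V × (α ⊕ β) → Finset ℕ) (g : α → V → ℕ) (j : β) (v : V) : Finset ℕ :=
  L (v, .inr j) \ Finset.univ.image (g · v)

theorem card_le_card_residualList_add (L : V × (α ⊕ β) → Finset ℕ) (g : α → V → ℕ) (j : β) (v : V) :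
    #(L (v, .inr j)) ≤ #(residualList L g j v) + #(Finset.univ.image (g · v)) :=
  Nat.sub_le_iff_le_add.1 (Finset.le_card_sdiff _ _)

theorem card_image_apply_le (g : α → V → ℕ) (v : V) :
    #(Finset.univ.image (g · v)) ≤ Fintype.card α :=
  Finset.card_image_le.trans Finset.card_univ.le

theorem le_card_residualList {v : V} (hL : k + Fintype.card α ≤ #(L (v, .inr j))) :
    k ≤ #(residualList L g j v) := by
  have := card_le_card_residualList_add L g j v
  have := card_image_apply_le g v
  omega

theorem image_apply_eq_sdiff_residualList {v : V}
    (hL : #(residualList L g j v) + Fintype.card α ≤ #(L (v, .inr j))) :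
    Finset.univ.image (g · v) = L (v, .inr j) \ residualList L g j v := by
  have hsub : Finset.univ.image (g · v) ⊆ L (v, .inr j) := by
    have hcard := Finset.card_sdiff_add_card_inter (L (v, .inr j)) (Finset.univ.image (g · v))
    have hle := card_image_apply_le g v
    rw [residualList] at hL
    exact Finset.inter_eq_right.1
      (Finset.eq_of_subset_of_card_le Finset.inter_subset_right (by omega))
  rw [residualList, Finset.sdiff_sdiff_eq_self hsub]

theorem isProperListColoring_boxProd_iff_s18 {f : V × (α ⊕ β) → ℕ} :
    IsProperListColoring (G □ completeBipartiteGraph α β) L f ↔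
      (∀ i, IsProperListColoring G (fun v => L (v, .inl i)) fun v => f (v, .inl i)) ∧
      ∀ j, IsProperListColoring G (residualList L (fun i v => f (v, .inl i)) j)
        fun v => f (v, .inr j) := by
  simp only [IsProperListColoring, residualList, Prod.forall, Sum.forall, boxProd_adj,
    completeBipartiteGraph_adj, Finset.mem_sdiff, Finset.mem_image, Finset.mem_univ, true_and,
    not_exists]
  constructor
  · rintro ⟨hL, hf⟩
    exact ⟨fun i => ⟨fun v => (hL v).1 i, fun v w hvw => (hf v).1 i w |>.1 i (.inl ⟨hvw, rfl⟩)⟩,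
      fun j => ⟨fun v => ⟨(hL v).2 j, fun i => (hf v).1 i v |>.2 j (.inr ⟨by simp, rfl⟩)⟩,
        fun v w hvw => (hf v).2 j w |>.2 j (.inl ⟨hvw, rfl⟩)⟩⟩
  · rintro ⟨hl, hr⟩
    refine ⟨fun v => ⟨fun i => (hl i).1 v, fun j => ((hr j).1 v).1⟩, fun v =>
      ⟨fun i w => ⟨fun i' => ?_, fun j => ?_⟩, fun j w => ⟨fun i => ?_, fun j' => ?_⟩⟩⟩
    · simpa using fun hvw h => h ▸ (hl i).2 hvw
    · simpa using fun h => h ▸ ((hr j).1 v).2 i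
    · simpa using fun h => h ▸ (((hr j).1 v).2 i ·.symm)
    · simpa using fun hvw h => h ▸ (hr j).2 hvw

theorem exists_isProperListColoring_boxProd_iff :
    (∃ f, IsProperListColoring (G □ completeBipartiteGraph α β) L f) ↔
      ∃ g : α → V → ℕ, (∀ i, IsProperListColoring G (fun v => L (v, .inl i)) (g i)) ∧
        ∀ j, ∃ f, IsProperListColoring G (residualList L g j) f := by
  constructor
  · rintro ⟨f, hf⟩
    have hf := isProperListColoring_boxProd_iff_s18.1 hf
    exact ⟨_, hf.1, fun j => ⟨_, hf.2 j⟩⟩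
  · rintro ⟨g, hg, h⟩
    choose f hf using h
    exact ⟨fun x => x.2.elim (g · x.1) (f · x.1), isProperListColoring_boxProd_iff_s18.2 ⟨hg, hf⟩⟩

theorem Choosable.boxProd_completeBipartiteGraph (hG : Choosable G k) :
    Choosable (G □ completeBipartiteGraph α β) (k + Fintype.card α) := by
  intro L hL
  choose g hg using fun i : α => hG.exists_isProperListColoring (L := fun v => L (v, .inl i))
    fun v => by rw [hL]; exact Nat.le_add_right ..
  exact exists_isProperListColoring_boxProd_iff.2 ⟨g, hg, fun j =>
    hG.exists_isProperListColoring fun v => le_card_residualList (hL _).ge⟩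

theorem StrongChromChoosable.exists_isProperListColoring_boxProd_of_mem_mem
    (hG : StrongChromChoosable G (k + 1)) (hk : 1 ≤ k) (hL : ∀ x, #(L x) = k + Fintype.card α)
    {v : V} {i i' : α} (hi : i ≠ i') {c : ℕ} (hc : c ∈ L (v, .inl i)) (hc' : c ∈ L (v, .inl i')) :
    ∃ f, IsProperListColoring (G □ completeBipartiteGraph α β) L f := by
  have hα : 1 < Fintype.card α := Fintype.one_lt_card_iff.2 ⟨i, i', hi⟩
  have hg (i : α) : ∃ g, IsProperListColoring G (fun v => L (v, .inl i)) g ∧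
      (c ∈ L (v, .inl i) → g v = c) := by
    have hlt (w : V) : k + 1 < #(L (w, .inl i)) := by rw [hL]; omega
    by_cases hci : c ∈ L (v, .inl i)
    · obtain ⟨g, hg, hgv⟩ :=
        (hG.choosable hk).exists_isProperListColoring_apply_eq hlt hci
      exact ⟨g, hg, fun _ => hgv⟩
    · obtain ⟨g, hg⟩ := (hG.choosable hk).exists_isProperListColoring fun w => (hlt w).le
      exact ⟨g, hg, fun h => absurd h hci⟩
  choose g hg hgc using hg
  refine exists_isProperListColoring_boxProd_iff.2 ⟨g, hg, fun j => ?_⟩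
  by_contra hno
  obtain ⟨B, hB, hLB⟩ := hG.exists_forall_eq hk (fun w => le_card_residualList (hL _).ge) hno
  have hsaved : #(Finset.univ.image (g · v)) < Fintype.card α := by
    refine (card_image_apply_le g v).lt_of_ne fun h => hi ?_
    exact Finset.card_image_iff.1 (h.trans Finset.card_univ.symm) (Finset.mem_univ i)
      (Finset.mem_univ i') ((hgc i hc).trans (hgc i' hc').symm)
  have := card_le_card_residualList_add L g j v
  rw [hL, hLB v, hB] at this
  omega

-- A color in `B \ B'` is used by some `g' i` at every vertex `v`, and `v ↦ i` is then a proper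
-- coloring of `G` by `α`.
theorem eq_of_residualList_eq_const (hcol : ¬ G.Colorable (Fintype.card α))
    (hL : ∀ v, k + Fintype.card α ≤ #(L (v, .inr j)))
    {B B' : Finset ℕ} (hB : #B = k) (hB' : #B' = k) (hR : ∀ v, residualList L g j v = B)
    (hR' : ∀ v, residualList L g' j v = B')
    (hg' : ∀ i ⦃v w⦄, G.Adj v w → g' i v ≠ g' i w) : B = B' := by
  refine Finset.eq_of_subset_of_card_le (fun c hc => ?_) (by rw [hB, hB'])
  by_contra hc'
  have hused (v : V) : ∃ i, g' i v = c := by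
    have himg : Finset.univ.image (g' · v) = L (v, .inr j) \ B' := by
      rw [← hR' v]
      exact image_apply_eq_sdiff_residualList (by rw [hR' v, hB']; exact hL v)
    have hcL : c ∈ L (v, .inr j) := (Finset.mem_sdiff.1 (hR v ▸ hc)).1
    simpa using himg.ge (Finset.mem_sdiff.2 ⟨hcL, hc'⟩)
  choose i hi using hused
  exact hcol (Coloring.mk i fun {v w} hvw h => hg' (i v) hvw (by rw [hi v, h, hi w])).colorable

theorem eq_of_residualList_eq_const_of_disjoint (hcol : ¬ G.Colorable (Fintype.card α))
    (hL : ∀ v, k + Fintype.card α ≤ #(L (v, .inr j)))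
    (hdisj : ∀ v i i' c, c ∈ L (v, .inl i) → c ∈ L (v, .inl i') → i = i')
    (hg : ∀ i, IsProperListColoring G (fun v => L (v, .inl i)) (g i))
    (hg' : ∀ i, IsProperListColoring G (fun v => L (v, .inl i)) (g' i))
    {B B' : Finset ℕ} (hB : #B = k) (hB' : #B' = k) (hR : ∀ v, residualList L g j v = B)
    (hR' : ∀ v, residualList L g' j v = B') : g = g' := by
  obtain rfl := eq_of_residualList_eq_const hcol hL hB hB' hR hR' fun i => (hg' i).2
  funext i v
  have himg : Finset.univ.image (g · v) = Finset.univ.image (g' · v) := by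
    rw [image_apply_eq_sdiff_residualList (by rw [hR v, hB]; exact hL v),
      image_apply_eq_sdiff_residualList (by rw [hR' v, hB]; exact hL v), hR v, hR' v]
  obtain ⟨i', hi'⟩ : ∃ i', g' i' v = g i v := by
    simpa using himg.le (Finset.mem_image_of_mem _ (Finset.mem_univ i))
  obtain rfl := hdisj v i i' (g i v) ((hg i).1 v) (hi' ▸ (hg' i').1 v)
  exact hi'.symm

theorem StrongChromChoosable.choosable_boxProd_of_card_lt [Finite V] [Fintype β]
    (hG : StrongChromChoosable G (k + 1)) (hk : 1 ≤ k) (hα : Fintype.card α ≤ k)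
    (hβ : Fintype.card β < listColorFunction G (k + Fintype.card α) ^ Fintype.card α) :
    Choosable (G □ completeBipartiteGraph α β) (k + Fintype.card α) := by
  intro L hL
  by_cases hdisj : ∀ v i i' c, c ∈ L (v, .inl i) → c ∈ L (v, .inl i') → i = i'
  swap
  · push Not at hdisj
    obtain ⟨v, i, i', c, hc, hc', hi⟩ := hdisj
    exact hG.exists_isProperListColoring_boxProd_of_mem_mem hk hL hi hc hc'
  by_contra hno
  have hblocked (g : ∀ i : α, ListColoring G fun v => L (v, .inl i)) :
      ∃ j : β, ∃ B : Finset ℕ, #B = k ∧ ∀ v, residualList L (fun i => (g i).1) j v = B := by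
    by_contra! h
    refine hno (exists_isProperListColoring_boxProd_iff.2 ⟨_, fun i => (g i).2, fun j => ?_⟩)
    by_contra hj
    obtain ⟨B, hB, hR⟩ := hG.exists_forall_eq hk (fun v => le_card_residualList (hL _).ge) hj
    exact (h j B hB).elim fun v hv => hv (hR v)
  choose j B hB hR using hblocked
  have hinj : Function.Injective j := fun g g' h => by
    have := eq_of_residualList_eq_const_of_disjoint
      (fun hcol => hG.not_colorable (hcol.mono hα)) (fun v => (hL _).ge) hdisj
      (fun i => (g i).2) (fun i => (g' i).2) (hB g) (hB g') (hR g) (h ▸ hR g')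
    exact funext fun i => Subtype.ext (congrFun this i)
  have hcard : listColorFunction G (k + Fintype.card α) ^ Fintype.card α ≤
      Nat.card (∀ i : α, ListColoring G fun v => L (v, .inl i)) := by
    rw [Nat.card_pi, ← Finset.card_univ]
    exact Finset.pow_card_le_prod _ _ _ fun i _ => listColorFunction_le fun v => hL _
  have := Nat.card_le_card_of_injective j hinj
  rw [Nat.card_eq_fintype_card (α := β)] at this
  omega

-- Each choice of colorings of the `α`-copies is blocked by a copy of its own, whose lists consist
-- of the colors used by that choice and `range k`.
theorem not_choosable_boxProd_of_card_le [Finite V] [Fintype β] (hcol : ¬ G.Colorable k)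
    {A : α → V → Finset ℕ} (hA : ∀ i v, #(A i v) = k + Fintype.card α)
    (hk : ∀ i v, ∀ c ∈ A i v, k ≤ c)
    (hdisj : ∀ v i i' c, c ∈ A i v → c ∈ A i' v → i = i')
    (hβ : Nat.card (∀ i, ListColoring G (A i)) ≤ Fintype.card β) :
    ¬ Choosable (G □ completeBipartiteGraph α β) (k + Fintype.card α) := by
  obtain ⟨e⟩ : Nonempty ((∀ i, ListColoring G (A i)) ↪ β) := by
    have := Fintype.ofFinite (∀ i, ListColoring G (A i))
    rw [Nat.card_eq_fintype_card] at hβ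
    exact Function.Embedding.nonempty_of_card_le hβ
  let image (g : ∀ i, ListColoring G (A i)) (v : V) : Finset ℕ := Finset.univ.image ((g · |>.1 v))
  let R : β → V → Finset ℕ := Function.extend e (fun g v => image g v ∪ .range k)
    fun _ _ => .range (k + Fintype.card α)
  let L (x : V × (α ⊕ β)) : Finset ℕ := x.2.elim (A · x.1) (R · x.1)
  have hLe (g v) : L (v, .inr (e g)) = image g v ∪ .range k := by
    simp only [L, R, Sum.elim_inr, e.injective.extend_apply]
  have hcard (g v) : #(image g v ∪ .range k) = k + Fintype.card α := by
    have hinj : Function.Injective fun i => (g i).1 v := fun i i' h =>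
      hdisj v i i' _ ((g i).2.1 v) <|
        (show (g i).1 v = (g i').1 v from h) ▸ (g i').2.1 v
    have hlow : Disjoint (image g v) (.range k) := by
      simp only [image, Finset.disjoint_left, Finset.mem_image, Finset.mem_univ, true_and,
        Finset.mem_range, forall_exists_index, forall_apply_eq_imp_iff, not_lt]
      exact fun i => hk i v _ ((g i).2.1 v)
    rw [Finset.card_union_of_disjoint hlow, Finset.card_image_of_injective _ hinj,
      Finset.card_univ, Finset.card_range, add_comm]
  intro hch
  obtain ⟨g, hg, hres⟩ := exists_isProperListColoring_boxProd_iff.1 <| hch L <| by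
    rintro ⟨v, i | j⟩
    · exact hA i v
    · by_cases hj : ∃ g, e g = j
      · obtain ⟨g, rfl⟩ := hj
        rw [hLe, hcard]
      · simp [L, R, Function.extend_apply' _ _ _ hj]
  obtain ⟨f, hf⟩ := hres (e fun i => ⟨g i, hg i⟩)
  have hsub (v : V) : residualList L g (e fun i => ⟨g i, hg i⟩) v ⊆ .range k := by
    rw [residualList, hLe, Finset.union_sdiff_left]
    exact Finset.sdiff_subset
  exact hcol (by simpa using hf.colorable hsub)

theorem exists_embeddings_disjoint (α : Type*) [Finite α] (k : ℕ) :
    ∃ φ : α → ℕ ↪ ℕ, (∀ i c, k ≤ φ i c) ∧ ∀ i i' c c', φ i c = φ i' c' → i = i' := by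
  obtain ⟨ι⟩ := nonempty_embedding_nat (α × ℕ)
  refine ⟨fun i => ⟨fun c => k + ι (i, c), fun c c' h => ?_⟩, fun i c => Nat.le_add_right ..,
    fun i i' c c' h => ?_⟩
  · simpa using h
  · exact (Prod.ext_iff.1 (ι.injective (Nat.add_left_cancel h))).1

theorem StrongChromChoosable.not_choosable_boxProd_of_le_card [Finite V] [Fintype β]
    (hG : StrongChromChoosable G (k + 1))
    (hβ : listColorFunction G (k + Fintype.card α) ^ Fintype.card α ≤ Fintype.card β) :
    ¬ Choosable (G □ completeBipartiteGraph α β) (k + Fintype.card α) := by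
  obtain ⟨L, hL, hmin⟩ := exists_card_listColoring_eq_listColorFunction G (k + Fintype.card α)
  obtain ⟨φ, hk, hφ⟩ := exists_embeddings_disjoint α k
  refine not_choosable_boxProd_of_card_le hG.not_colorable (A := fun i v => (L v).map (φ i))
    (fun i v => by rw [Finset.card_map, hL]) ?_ ?_ ?_
  · simp only [Finset.mem_map]
    rintro i v _ ⟨c, -, rfl⟩
    exact hk i c
  · simp only [Finset.mem_map]
    rintro v i i' _ ⟨c, -, rfl⟩ ⟨c', -, h⟩
    exact (hφ i' i c' c h).symm
  · simpa only [Nat.card_pi, card_listColoring_map, hmin, Finset.prod_const, Finset.card_univ]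
      using hβ

theorem StrongChromChoosable.listChromaticNumber_boxProd_eq_iff [Finite V] [Fintype β]
    (hG : StrongChromChoosable G (k + 1)) (hk : 1 ≤ k) (hα : Fintype.card α ≤ k) :
    listChromaticNumber (G □ completeBipartiteGraph α β) = k + 1 + Fintype.card α ↔
      listColorFunction G (k + Fintype.card α) ^ Fintype.card α ≤ Fintype.card β := by
  rw [Nat.add_right_comm, listChromaticNumber_eq_succ_iff, Nat.add_right_comm,
    and_iff_right (hG.choosable hk).boxProd_completeBipartiteGraph]
  refine ⟨fun h => ?_, hG.not_choosable_boxProd_of_le_card⟩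
  contrapose! h
  exact hG.choosable_boxProd_of_card_lt hk hα h

theorem StrongChromChoosable.isLeast_listChromaticNumber_boxProd [Finite V] {a : ℕ}
    (hG : StrongChromChoosable G (k + 1)) (hk : 1 ≤ k) (ha : a ≤ k) :
    IsLeast {b : ℕ | listChromaticNumber (G □ completeBipartiteGraph (Fin a) (Fin b)) = k + 1 + a}
      (listColorFunction G (k + a) ^ a) := by
  have (b : ℕ) := hG.listChromaticNumber_boxProd_eq_iff (α := Fin a) (β := Fin b) hk
    (by rwa [Fintype.card_fin])
  simp only [Fintype.card_fin] at this
  simp only [this]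
  exact isLeast_Ici

end BoxProd

section Counting

variable {n j m : ℕ}

open scoped Classical in
theorem card_listColoring_fin_succ (G : SimpleGraph (Fin (n + 1))) (L : Fin (n + 1) → Finset ℕ) :
    Nat.card (ListColoring G L) = ∑ c ∈ L 0, Nat.card (ListColoring (G.comap Fin.succ) fun i =>
      {y ∈ L i.succ | G.Adj 0 i.succ → y ≠ c}) := by
  let split : ListColoring G L ≃ Σ c : L 0, ListColoring (G.comap Fin.succ) fun i =>
      {y ∈ L i.succ | G.Adj 0 i.succ → y ≠ c} :=
    { toFun f := ⟨⟨f.1 0, f.2.1 0⟩, f.1 ∘ Fin.succ, fun i =>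
        Finset.mem_filter.2 ⟨f.2.1 _, fun h => (f.2.2 h).symm⟩, fun _ _ h => f.2.2 h⟩
      invFun p := ⟨Fin.cons p.1.1 p.2.1,
        Fin.forall_fin_succ.2 ⟨p.1.2, fun i => (Finset.mem_filter.1 (p.2.2.1 i)).1⟩,
        Fin.forall_fin_succ.2
          ⟨Fin.forall_fin_succ.2 ⟨fun h => (G.irrefl h).elim,
              fun i h => ((Finset.mem_filter.1 (p.2.2.1 i)).2 h).symm⟩,
            fun i => Fin.forall_fin_succ.2
              ⟨fun h => (Finset.mem_filter.1 (p.2.2.1 i)).2 h.symm, fun _ h => p.2.2.2 h⟩⟩⟩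
      left_inv f := Subtype.ext (Fin.cons_self_tail f.1)
      right_inv _ := rfl }
  rw [Nat.card_congr split, Nat.card_sigma]
  exact Finset.sum_coe_sort (L 0) fun c => Nat.card (ListColoring (G.comap Fin.succ) fun i =>
    {y ∈ L i.succ | G.Adj 0 i.succ → y ≠ c})

theorem card_listColoring_of_isEmpty {V : Type*} [IsEmpty V] (G : SimpleGraph V)
    (L : V → Finset ℕ) : Nat.card (ListColoring G L) = 1 := by
  have : Unique (ListColoring G L) :=
    ⟨⟨isEmptyElim, isEmptyElim, fun v => isEmptyElim v⟩, fun _ => Subsingleton.elim _ _⟩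
  exact Nat.card_unique

theorem descFactorial_le_card_listColoring_top {L : Fin n → Finset ℕ} (hL : ∀ i, m ≤ #(L i)) :
    m.descFactorial n ≤ Nat.card (ListColoring ⊤ L) := by
  induction n generalizing m with
  | zero => rw [card_listColoring_of_isEmpty, Nat.descFactorial_zero]
  | succ n ih =>
    obtain _ | m := m
    · simp
    rw [card_listColoring_fin_succ, Nat.succ_descFactorial_succ,
      comap_top (Fin.succ_injective n)]
    refine (Nat.mul_le_mul_right _ (hL 0)).trans (Finset.card_nsmul_le_sum _ _ _ fun c _ => ih ?_)
    intro i
    have := Finset.pred_card_le_card_erase (s := L i.succ) (a := c)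
    simp only [top_adj, ne_eq, (Fin.succ_ne_zero i).symm, not_false_eq_true, true_imp_iff,
      Finset.filter_ne']
    have := hL i.succ
    omega

theorem card_listColoring_top_const (V : Type*) [Fintype V] (A : Finset ℕ) :
    Nat.card (ListColoring (⊤ : SimpleGraph V) fun _ => A) =
      (#A).descFactorial (Fintype.card V) := by
  classical
  let toEmbedding : ListColoring (⊤ : SimpleGraph V) (fun _ => A) ≃ (V ↪ A) :=
    { toFun f := ⟨fun v => ⟨f.1 v, f.2.1 v⟩, fun _ _ h =>
        not_imp_not.1 (fun hvw => f.2.2 ((top_adj _ _).2 hvw)) (congrArg Subtype.val h)⟩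
      invFun e := ⟨fun v => e v, fun v => (e v).2, fun _ _ hvw h =>
        hvw.ne (e.injective (Subtype.ext h))⟩ }
  rw [Nat.card_congr toEmbedding, Nat.card_eq_fintype_card, Fintype.card_embedding_eq,
    Fintype.card_coe]

theorem listColorFunction_top (n m : ℕ) :
    listColorFunction (⊤ : SimpleGraph (Fin n)) m = m.descFactorial n := by
  have hconst := card_listColoring_top_const (Fin n) (Finset.range m)
  rw [Finset.card_range, Fintype.card_fin] at hconst
  rw [listColorFunction_eq (Finset.card_range m), hconst]
  exact fun L hL => hconst.trans_le (descFactorial_le_card_listColoring_top fun i => (hL i).ge)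

theorem strongChromChoosable_top (V : Type*) [Fintype V] :
    StrongChromChoosable (⊤ : SimpleGraph V) (Fintype.card V) := by
  classical
  refine ⟨chromaticNumber_top, fun L hL hno => ?_⟩
  obtain ⟨s, hs⟩ : ∃ s : Finset V, #(s.biUnion L) < #s := by
    by_contra! hHall
    obtain ⟨f, hf, hfL⟩ := (Finset.all_card_le_biUnion_card_iff_exists_injective L).1 hHall
    exact hno ⟨f, hfL, fun _ _ hvw => hf.ne hvw.ne⟩
  have hsV : #s ≤ Fintype.card V := s.card_le_univ
  obtain ⟨u, hu⟩ : s.Nonempty := Finset.card_pos.1 (by omega)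
  have hLs := Finset.card_le_card (Finset.subset_biUnion_of_mem L hu)
  rw [hL] at hLs
  obtain rfl := (Finset.card_eq_iff_eq_univ s).1 (by omega)
  have hbiUnion (v : V) : L v = Finset.univ.biUnion L :=
    Finset.eq_of_subset_of_card_le (Finset.subset_biUnion_of_mem L (Finset.mem_univ v))
      (by rw [hL]; omega)
  exact fun v w => (hbiUnion v).trans (hbiUnion w).symm

end Counting

section Cycle

variable {n j c d x y : ℕ} {A B S : Finset ℕ} {l : List (Finset ℕ)}

/-- The number of ways to properly color the interior vertices of a path from the lists `l`, given
that its first vertex has color `x` and its last vertex has color `c`. -/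
def interiorCount (c : ℕ) : List (Finset ℕ) → ℕ → ℕ
  | [], x => if x = c then 0 else 1
  | A :: l, x => ∑ y ∈ A.erase x, interiorCount c l y

theorem comap_succ_pathGraph (n : ℕ) :
    (pathGraph (n + 2)).comap Fin.succ = pathGraph (n + 1) := by
  ext i k
  simp [pathGraph_adj]

theorem comap_succ_cycleGraph (n : ℕ) :
    (cycleGraph (n + 2)).comap Fin.succ = pathGraph (n + 1) := by
  ext i k
  simp only [comap_adj, cycleGraph_adj, pathGraph_adj, sub_eq_iff_eq_add', Fin.ext_iff,
    Fin.val_add_one, Fin.val_succ, Fin.val_last]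
  grind

theorem cycleGraph_adj_zero_succ {i : Fin (n + 1)} :
    (cycleGraph (n + 2)).Adj 0 i.succ ↔ i = 0 ∨ i = Fin.last n := by
  simp only [cycleGraph_adj, sub_eq_iff_eq_add', Fin.ext_iff, Fin.val_add_one, Fin.val_succ,
    Fin.val_last, Fin.val_zero]
  grind

theorem card_listColoring_pathGraph (L : Fin (n + 1) → Finset ℕ) (x c : ℕ) :
    Nat.card (ListColoring (pathGraph (n + 1)) fun i =>
      {y ∈ L i | (i = 0 → y ≠ x) ∧ (i = Fin.last n → y ≠ c)}) =
      interiorCount c (List.ofFn L) x := by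
  induction n generalizing x with
  | zero =>
    have hlist : {y ∈ L 0 | ((0 : Fin 1) = 0 → y ≠ x) ∧ ((0 : Fin 1) = Fin.last 0 → y ≠ c)} =
        {y ∈ (L 0).erase x | y ≠ c} := by
      ext
      simp [Fin.last, and_assoc, and_comm]
    rw [card_listColoring_fin_succ, hlist]
    simp [card_listColoring_of_isEmpty, interiorCount, Finset.sum_ite]
  | succ n ih =>
    rw [card_listColoring_fin_succ, comap_succ_pathGraph, List.ofFn_succ, interiorCount]
    refine Finset.sum_congr (by ext; simp [and_comm]) fun y _ => ?_
    rw [← ih]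
    refine congrArg (fun M => Nat.card (ListColoring (pathGraph (n + 1)) M))
      (funext fun i => Finset.ext fun z => ?_)
    simp [pathGraph_adj, and_assoc, and_comm]

theorem card_listColoring_cycleGraph (L : Fin (n + 2) → Finset ℕ) :
    Nat.card (ListColoring (cycleGraph (n + 2)) L) =
      ∑ c ∈ L 0, interiorCount c (List.ofFn fun i => L i.succ) c := by
  rw [card_listColoring_fin_succ, comap_succ_cycleGraph]
  refine Finset.sum_congr rfl fun c _ => ?_
  rw [← card_listColoring_pathGraph]
  refine congrArg (fun M => Nat.card (ListColoring (pathGraph (n + 1)) M))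
    (funext fun i => Finset.ext fun z => ?_)
  simp only [Finset.mem_filter, cycleGraph_adj_zero_succ, or_imp]

theorem sum_sum_erase (S B : Finset ℕ) (w : ℕ → ℕ) :
    ∑ y ∈ S, ∑ z ∈ B.erase y, w z = ∑ z ∈ B, #(S.erase z) * w z := by
  rw [Finset.sum_comm' (t' := B) (s' := S.erase)]
  · simp only [Finset.sum_const, smul_eq_mul]
  · simp only [Finset.mem_erase]
    tauto

theorem mul_sum_le_sum_sum_erase (hA : j + 1 ≤ #A) (B : Finset ℕ) (w : ℕ → ℕ) :
    j * ∑ z ∈ B, w z ≤ ∑ y ∈ A, ∑ z ∈ B.erase y, w z := by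
  rw [sum_sum_erase, Finset.mul_sum]
  exact Finset.sum_le_sum fun z _ => Nat.mul_le_mul_right _
    ((Nat.le_sub_one_of_lt hA).trans Finset.pred_card_le_card_erase)

theorem exists_mul_sum_add_le_sum_sum_erase (hS : j + 1 ≤ #S) (hB : j + 1 < #B) (w : ℕ → ℕ) :
    ∃ e, j * ∑ z ∈ B, w z + w e ≤ ∑ y ∈ S, ∑ z ∈ B.erase y, w z := by
  obtain ⟨K, hKS, hK⟩ := Finset.exists_subset_card_eq hS
  obtain ⟨e, heB, heK⟩ := Finset.exists_mem_notMem_of_card_lt_card (hK.trans_lt hB)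
  have hcoeff (z : ℕ) : (j + if z = e then 1 else 0) ≤ #(S.erase z) := by
    split_ifs with hz
    · rw [hz, ← hK]
      exact Finset.card_le_card (Finset.subset_erase.2 ⟨hKS, heK⟩)
    · exact (Nat.le_sub_one_of_lt hS).trans Finset.pred_card_le_card_erase
  refine ⟨e, ?_⟩
  calc j * ∑ z ∈ B, w z + w e = ∑ z ∈ B, (j + if z = e then 1 else 0) * w z := by
        simp [add_mul, Finset.sum_add_distrib, Finset.mul_sum, heB]
    _ ≤ ∑ z ∈ B, #(S.erase z) * w z :=
        Finset.sum_le_sum fun z _ => Nat.mul_le_mul_right _ (hcoeff z)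
    _ = _ := (sum_sum_erase S B w).symm

theorem pow_le_sum_interiorCount (c : ℕ) (hA : j + 1 ≤ #A) (hl : ∀ B ∈ l, j + 1 ≤ #B) :
    j ^ (l.length + 1) ≤ ∑ y ∈ A, interiorCount c l y := by
  induction l generalizing A with
  | nil =>
    have := Finset.pred_card_le_card_erase (s := A) (a := c)
    simp only [interiorCount, Finset.sum_ite, Finset.filter_ne', Finset.sum_const_zero, zero_add,
      Finset.sum_const, smul_eq_mul, mul_one, List.length_nil, pow_one]
    omega
  | cons B l ih =>
    rw [List.forall_mem_cons] at hl
    rw [List.length_cons, pow_succ']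
    exact (Nat.mul_le_mul_left j (ih hl.1 hl.2)).trans (mul_sum_le_sum_sum_erase hA B _)

-- Equality holds when `x = c` and all lists equal one `(j + 1)`-set containing `c`.
theorem pow_le_mul_interiorCount_add (c : ℕ) (heven : Even l.length)
    (hl : ∀ B ∈ l, j + 1 ≤ #B) (x : ℕ) :
    j ^ (l.length + 1) ≤ (j + 1) * interiorCount c l x + j := by
  obtain _ | j := j
  · simp
  induction l using List.twoStepInduction generalizing x with
  | nil => simp
  | singleton => simp at heven
  | cons_cons A B l ih _ =>
    simp only [List.forall_mem_cons] at hl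
    obtain ⟨hA, hB, hl⟩ := hl
    have hAx : j + 1 ≤ #(A.erase x) :=
      (Nat.le_sub_one_of_lt hA).trans Finset.pred_card_le_card_erase
    obtain ⟨e, he⟩ := exists_mul_sum_add_le_sum_sum_erase hAx hB (interiorCount c l)
    have hN := pow_le_sum_interiorCount c hB hl
    have hw := ih (by simpa [Nat.even_add_one] using heven) e hl
    simp only [List.length_cons, interiorCount]
    calc (j + 1) ^ (l.length + 1 + 1 + 1)
        = (j + 2) * j * (j + 1) ^ (l.length + 1) + (j + 1) ^ (l.length + 1) := by ring
      _ ≤ (j + 2) * j * ∑ z ∈ B, interiorCount c l z +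
          ((j + 2) * interiorCount c l e + (j + 1)) := by gcongr
      _ = (j + 2) * (j * ∑ z ∈ B, interiorCount c l z + interiorCount c l e) + (j + 1) := by ring
      _ ≤ _ := by gcongr

theorem pow_le_card_listColoring_cycleGraph_add {l : ℕ} (hl : 1 ≤ l)
    {L : Fin (2 * l + 1) → Finset ℕ} (hL : ∀ i, #(L i) = j + 1) :
    j ^ (2 * l + 1) ≤ Nat.card (ListColoring (cycleGraph (2 * l + 1)) L) + j := by
  obtain ⟨l, rfl⟩ := Nat.exists_eq_add_of_le' hl
  have hinterior (c : ℕ) := pow_le_mul_interiorCount_add (j := j) c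
    (l := List.ofFn fun i : Fin (2 * l + 2) => L i.succ)
    (by simp [parity_simps]) (List.forall_mem_ofFn_iff.2 fun _ => (hL _).ge) c
  have := Finset.sum_le_sum fun c (_ : c ∈ L 0) => hinterior c
  simp only [List.length_ofFn, Finset.sum_const, Finset.sum_add_distrib, ← Finset.mul_sum, hL,
    smul_eq_mul, ← mul_add, ← card_listColoring_cycleGraph (n := 2 * l + 1) L] at this
  exact Nat.le_of_mul_le_mul_left this j.succ_pos

theorem sum_interiorCount_replicate (hA : #A = j + 1) (hc : c ∈ A) (n : ℕ) :
    ∑ y ∈ A, interiorCount c (List.replicate n A) y = j ^ (n + 1) := by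
  induction n with
  | zero => simp [interiorCount, Finset.sum_ite, Finset.filter_ne', hc, hA]
  | succ n ih =>
    have (z) (hz : z ∈ A) : #(A.erase z) = j := by rw [Finset.card_erase_of_mem hz, hA]; rfl
    simp only [List.replicate_succ, interiorCount]
    rw [sum_sum_erase, Finset.sum_congr rfl fun z hz => by rw [this z hz], ← Finset.mul_sum, ih,
      ← pow_succ']

theorem mul_interiorCount_replicate (hA : #A = j + 1) (hc : c ∈ A) (n : ℕ) :
    ((j + 1) * interiorCount c (List.replicate n A) c : ℤ) = j ^ (n + 1) - (-1) ^ n * j := by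
  induction n with
  | zero => simp [interiorCount]
  | succ n ih =>
    have hsum : (interiorCount c (List.replicate (n + 1) A) c +
        interiorCount c (List.replicate n A) c : ℤ) = j ^ (n + 1) := by
      exact_mod_cast (Finset.sum_erase_add A _ hc).trans (sum_interiorCount_replicate hA hc n)
    linear_combination (j + 1 : ℤ) * hsum - ih

theorem card_listColoring_cycleGraph_const (hA : #A = j + 1) (n : ℕ) :
    (Nat.card (ListColoring (cycleGraph (n + 2)) fun _ => A) : ℤ) =
      j ^ (n + 2) + (-1) ^ (n + 2) * j := by
  rw [card_listColoring_cycleGraph]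
  refine mul_left_cancel₀ (Nat.cast_add_one_ne_zero j : (j + 1 : ℤ) ≠ 0) ?_
  rw [List.ofFn_const, Nat.cast_sum, Finset.mul_sum,
    Finset.sum_congr rfl fun c hc => mul_interiorCount_replicate hA hc (n + 1),
    Finset.sum_const, hA, nsmul_eq_mul]
  push_cast
  ring

theorem listColorFunction_cycleGraph_of_odd {l : ℕ} (hl : 1 ≤ l) (j : ℕ) :
    listColorFunction (cycleGraph (2 * l + 1)) (j + 1) = j ^ (2 * l + 1) - j := by
  have hconst : Nat.card (ListColoring (cycleGraph (2 * l + 1)) fun _ => .range (j + 1)) =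
      j ^ (2 * l + 1) - j := by
    obtain ⟨l, rfl⟩ := Nat.exists_eq_add_of_le' hl
    have := card_listColoring_cycleGraph_const (Finset.card_range (j + 1)) (2 * l + 1)
    rw [Odd.neg_one_pow (by simp [parity_simps])] at this
    rw [Nat.mul_add_one, eq_tsub_iff_add_eq_of_le (Nat.le_self_pow (by omega) j)]
    zify
    linear_combination this
  rw [listColorFunction_eq (Finset.card_range (j + 1)), hconst]
  exact fun L hL => hconst.trans_le
    (Nat.sub_le_iff_le_add.2 (pow_le_card_listColoring_cycleGraph_add hl hL))

theorem eq_pair_of_interiorCount_eq_zero (hl : ∀ A ∈ l, #A = 2) (hxy : x ≠ y)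
    (hx : interiorCount c l x = 0) (hy : interiorCount d l y = 0) : ∀ A ∈ l, A = {x, y} := by
  induction l generalizing x y with
  | nil => simp
  | cons A l ih =>
    rw [List.forall_mem_cons] at hl ⊢
    have hmem {x c} (h : interiorCount c (A :: l) x = 0) : x ∈ A := by
      by_contra hxA
      rw [interiorCount, Finset.erase_eq_of_notMem hxA] at h
      have := pow_le_sum_interiorCount (j := 1) (l := l) c hl.1.ge fun B hB => (hl.2 B hB).ge
      rw [h] at this
      simp at this
    have hA : A = {x, y} := (Finset.eq_of_subset_of_card_le
      (Finset.insert_subset (hmem hx) (Finset.singleton_subset_iff.2 (hmem hy)))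
      (by rw [hl.1, Finset.card_pair hxy])).symm
    refine ⟨hA, fun B hB => ?_⟩
    rw [interiorCount, hA] at hx hy
    rw [Finset.erase_insert (by simpa), Finset.sum_singleton] at hx
    rw [Finset.pair_comm, Finset.erase_insert (by simpa using hxy.symm), Finset.sum_singleton] at hy
    rw [ih hl.2 hxy.symm hx hy B hB, Finset.pair_comm]

theorem apply_eq_of_not_exists_isProperListColoring_cycleGraph {L : Fin (n + 2) → Finset ℕ}
    (hL : ∀ i, #(L i) = 2) (hno : ¬ ∃ f, IsProperListColoring (cycleGraph (n + 2)) L f)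
    (i : Fin (n + 2)) : L i = L 0 := by
  obtain ⟨c, d, hcd, hL0⟩ := Finset.card_eq_two.1 (hL 0)
  have : IsEmpty (ListColoring (cycleGraph (n + 2)) L) := ⟨fun f => hno ⟨_, f.2⟩⟩
  have hcount : ∑ c ∈ L 0, interiorCount c (List.ofFn fun i => L i.succ) c = 0 := by
    rw [← card_listColoring_cycleGraph, Nat.card_of_isEmpty]
  rw [hL0, Finset.sum_pair hcd, Nat.add_eq_zero_iff] at hcount
  induction i using Fin.cases with
  | zero => rfl
  | succ i =>
    rw [hL0]
    exact eq_pair_of_interiorCount_eq_zero (List.forall_mem_ofFn_iff.2 fun _ => hL _) hcd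
      hcount.1 hcount.2 _ (List.mem_ofFn.2 ⟨i, rfl⟩)

theorem strongChromChoosable_cycleGraph_of_odd {l : ℕ} (hl : 1 ≤ l) :
    StrongChromChoosable (cycleGraph (2 * l + 1)) 3 := by
  refine ⟨chromaticNumber_cycleGraph_of_odd _ (by omega) (odd_two_mul_add_one l),
    fun L hL hno => ?_⟩
  obtain ⟨l, rfl⟩ := Nat.exists_eq_add_of_le' hl
  have := apply_eq_of_not_exists_isProperListColoring_cycleGraph (n := 2 * l + 1) hL hno
  exact fun v w => (this v).trans (this w).symm

end Cycle

theorem f_a_complete_and_oddCycle :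
    (∀ n a : ℕ, 1 ≤ a → a + 1 ≤ n →
      IsLeast {b : ℕ |
          listChromaticNumber ((⊤ : SimpleGraph (Fin n)) □
            completeBipartiteGraph (Fin a) (Fin b)) = n + a}
        ((Nat.factorial (n + a - 1) / Nat.factorial (a - 1)) ^ a)) ∧
    (∀ l : ℕ, 1 ≤ l →
      IsLeast {b : ℕ |
          listChromaticNumber (cycleGraph (2 * l + 1) □
            completeBipartiteGraph (Fin 2) (Fin b)) = 5}
        (9 * (9 ^ l - 1) ^ 2)) := by
  refine ⟨fun n a ha han => ?_, fun l hl => ?_⟩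
  · obtain ⟨k, rfl⟩ : ∃ k, n = k + 1 := Nat.exists_eq_add_of_le' (Nat.le_of_add_left_le han)
    have hG : StrongChromChoosable (⊤ : SimpleGraph (Fin (k + 1))) (k + 1) := by
      simpa using strongChromChoosable_top (Fin (k + 1))
    have hP : (k + 1 + a - 1).factorial / (a - 1).factorial =
        listColorFunction (⊤ : SimpleGraph (Fin (k + 1))) (k + a) := by
      rw [listColorFunction_top, Nat.descFactorial_eq_div (by omega)]
      congr 2 <;> omega
    rw [hP]
    exact hG.isLeast_listChromaticNumber_boxProd (by omega) (by omega)
  · have hP : 9 * (9 ^ l - 1) ^ 2 = listColorFunction (cycleGraph (2 * l + 1)) (2 + 2) ^ 2 := by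
      have h9 : 3 ^ (2 * l + 1) - 3 = 3 * (9 ^ l - 1) := by
        norm_num [pow_succ', pow_mul, Nat.mul_sub_one]
      rw [listColorFunction_cycleGraph_of_odd hl 3, h9, mul_pow]
      norm_num
    rw [hP]
    exact (strongChromChoosable_cycleGraph_of_odd hl).isLeast_listChromaticNumber_boxProd
      one_le_two le_rfl
end
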